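/- Let (A, φ) be a scalar probability space, let a ∈ A be R-diagonal, and let t₁, …, tₙ ∈ {−1, 1} (writing a¹ = a and a^{−1} = a*). Define a partition σ of {1, …, n} by declaring i ∼ j if and only if t₁ + ⋯ + t_{i−1} + t_i/2 = t₁ + ⋯ + t_{j−1} + t_j/2. If π ∈ NC(n) is a noncrossing partition with κ_π(a^{t₁}, …, a^{tₙ}) ≠ 0, then t₁ + ⋯ + tₙ = 0 and every block of π is contained in a block of σ. -/

import Mathlib

/-! The heart of the proof is that the cumulants of an `R`-diagonal element `a` vanish on every word in
`a` and `star a` that is not alternating of even length (`listCum_eq_zero`).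

Cut such a word between equal adjacent letters, into maximal alternating chunks, and centre the
chunks of even length. By `R`-diagonality the product of the chunks has `φ` equal to zero
(`admissible_chunks`, `Admissible.moment_eq_zero`). On the other hand, the moment–cumulant formula
writes it as the sum of `κ_π` over those noncrossing partitions `π` for which no even chunk is a
union of blocks (`centred_moment`), because an interval which is a union of blocks splits a
noncrossing partition into two independent ones (`sum_ncParts_split`). The one-block partition is
one of these `π`; for any other, all blocks are shorter than the word, so by induction on the length
`κ_π` vanishes unless all blocks are alternating of even size. In that case some chunk is a union of
blocks (`exists_chunk_isUnionOf`), and this chunk has even size (`IsUnionOf.even_card`), so that `π`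
does not occur. Only the cumulant of the whole word is left, and it is zero.

Consequently, if `κ_π ≠ 0`, all blocks of `π` are alternating of even size. Each block has exponent
sum zero, which gives the first claim. For the second, the gap between two consecutive elements of a
block is a union of blocks because `π` is noncrossing, so it has exponent sum zero, and the two
elements carry opposite exponents; hence they have the same level (`IsNCPart.level_eq`).
-/

noncomputable section

variable {A : Type*}

section Scaffold
variable [Ring A] [Algebra ℂ A] [StarRing A] [StarModule ℂ A]

/-- A faithful tracial state on a unital complex `⋆`-algebra. -/
structure IsFaithfulTracialState (φ : A →ₗ[ℂ] ℂ) : Prop where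
  unital : φ 1 = 1
  positive : ∀ a : A, 0 ≤ (φ (star a * a)).re ∧ (φ (star a * a)).im = 0
  tracial : ∀ a b : A, φ (a * b) = φ (b * a)
  faithful : ∀ a : A, φ (star a * a) = 0 → a = 0

/-- `E` is a conditional expectation onto the subalgebra with underlying set `D`. -/
def IsCondExp (D : Set A) (E : A →ₗ[ℂ] A) : Prop :=
  E 1 = 1 ∧ (∀ x : A, E x ∈ D) ∧
    ∀ d₁ ∈ D, ∀ d₂ ∈ D, ∀ x : A, E (d₁ * x * d₂) = d₁ * E x * d₂

/-- `letter a true = a`, `letter a false = star a`. -/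
def letter (a : A) : Bool → A := fun b => if b then a else star a

/-- Words `d₀ · a^{s₁} · d₁ · a^{s₂} · ⋯ · a^{sₖ} · dₖ` with the `dᵢ` running over `D`
and the pattern of letters (`true` for `a`, `false` for `star a`) given by the list. -/
def wordSet (D : Set A) (a : A) : List Bool → Set A
  | [] => D
  | b :: rest => {x | ∃ d ∈ D, ∃ w ∈ wordSet D a rest, x = d * letter a b * w}

/-- The alternating list of length `n` starting with `b`. -/
def altList : Bool → ℕ → List Bool
  | _, 0 => []
  | b, n + 1 => b :: altList (!b) n

/-- The sets `P₁₁, P₁₂, P₂₁, P₂₂` associated to `a` (indices `0,1` standing for `1,2`). -/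
def Pset (D : Set A) (E : A →ₗ[ℂ] A) (a : A) : Fin 2 → Fin 2 → Set A :=
  ![![↑(Submodule.span ℂ (⋃ m : ℕ, wordSet D a (altList false (2 * m + 1)))),
     {x | x ∈ Submodule.span ℂ (⋃ m : ℕ, wordSet D a (altList false (2 * m))) ∧ E x = 0}],
    ![{x | x ∈ Submodule.span ℂ (⋃ m : ℕ, wordSet D a (altList true (2 * m))) ∧ E x = 0},
     ↑(Submodule.span ℂ (⋃ m : ℕ, wordSet D a (altList true (2 * m + 1))))]]

/-- `a` is `R`-diagonal with amalgamation over `D` (w.r.t. the conditional expectation `E`). -/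
def RDiagWithAmalg (D : Set A) (E : A →ₗ[ℂ] A) (a : A) : Prop :=
  ∀ n : ℕ, 0 < n → ∀ (i : Fin (n + 1) → Fin 2) (x : Fin n → A),
    (∀ k : Fin n, x k ∈ Pset D E a (i k.castSucc) (i k.succ)) →
    E (List.ofFn x).prod = 0

/-- `x` and `y` are identically `D`-distributed:
`E(x^{s₁} d₁ x^{s₂} d₂ ⋯ d_{n−1} x^{sₙ}) = E(y^{s₁} d₁ ⋯ d_{n−1} y^{sₙ})`. -/
def IdentDistrib (D : Set A) (E : A →ₗ[ℂ] A) (x y : A) : Prop :=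
  ∀ n : ℕ, 0 < n → ∀ (s : Fin n → Bool) (d : Fin n → A), (∀ i, d i ∈ D) →
    E (List.ofFn fun i : Fin n =>
        letter x (s i) * (if i.val + 1 < n then d i else 1)).prod =
    E (List.ofFn fun i : Fin n =>
        letter y (s i) * (if i.val + 1 < n then d i else 1)).prod

/-- A family of subsets of `A` is free with amalgamation over `D`. -/
def FreeAmalg (D : Set A) (E : A →ₗ[ℂ] A) {ι : Type*} (X : ι → Set A) : Prop :=
  ∀ n : ℕ, 0 < n → ∀ (s : Fin n → ι) (x : Fin n → A),
    (∀ k : Fin n, x k ∈ Algebra.adjoin ℂ (X (s k) ∪ D)) →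
    (∀ (k : Fin n) (h : k.val + 1 < n), s k ≠ s ⟨k.val + 1, h⟩) →
    (∀ k : Fin n, E (x k) = 0) →
    E (List.ofFn x).prod = 0

/-- A scalar random variable: normal, commutes with `D`, with scalar `D`-moments. -/
def IsScalarRV (D : Set A) (E : A →ₗ[ℂ] A) (y : A) : Prop :=
  y * star y = star y * y ∧
  (∀ d ∈ D, d * y = y * d ∧ d * star y = star y * d) ∧
  ∀ k l : ℕ, ∃ c : ℂ, E (y ^ k * (star y) ^ l) = algebraMap ℂ A c

end Scaffold

/-- The scalars `ℂ·1` inside `A`. -/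
def scalarD (A : Type*) [Ring A] [Algebra ℂ A] : Set A := Set.range (algebraMap ℂ A)

section Scaffold2
variable [Ring A] [Algebra ℂ A] [StarRing A] [StarModule ℂ A]

/-- The conditional expectation `x ↦ φ(x)·1` associated to a state `φ`. -/
def scalarE (φ : A →ₗ[ℂ] ℂ) : A →ₗ[ℂ] A := (Algebra.linearMap ℂ A).comp φ

/-- `a` is (scalar) `R`-diagonal with respect to `φ`. -/
def RDiag (φ : A →ₗ[ℂ] ℂ) (a : A) : Prop :=
  RDiagWithAmalg (scalarD A) (scalarE φ) a

/-- A family of subsets of `A` is free with respect to the state `φ`. -/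
def FreeScalar (φ : A →ₗ[ℂ] ℂ) {ι : Type*} (X : ι → Set A) : Prop :=
  FreeAmalg (scalarD A) (scalarE φ) X

/-- `a^1 = a`, `a^{-1} = star a`. -/
def sgnPow (a : A) (t : ℤ) : A := if t = 1 then a else star a

/-- The set of balanced words in `a, star a`. -/
def balancedWords (a : A) : Set A :=
  {w | ∃ (n : ℕ) (_ : 0 < n) (t : Fin n → ℤ),
    (∀ i, t i = 1 ∨ t i = -1) ∧
    (∑ i, t i) = 0 ∧
    (∀ j : ℕ, 0 < j → j < n →
      (∑ i ∈ Finset.univ.filter (fun i : Fin n => i.val < j), t i) ≤ 0) ∧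
    w = (List.ofFn fun i : Fin n => sgnPow a (t i)).prod}

/-- The algebra `K_a`: the span of balanced words. -/
def Kset (a : A) : Set A := ↑(Submodule.span ℂ (balancedWords a))

end Scaffold2

end

noncomputable section

/-- A finite partition of `{0, …, n−1}` is noncrossing if whenever `a < b < c < d` with
`a, c` in one block and `b, d` in another, the two blocks coincide. -/
def IsNoncrossing {n : ℕ} (π : Finpartition (Finset.univ : Finset (Fin n))) : Prop :=
  ∀ a b c d : Fin n, a < b → b < c → c < d →
    ∀ B₁ ∈ π.parts, ∀ B₂ ∈ π.parts,
      a ∈ B₁ → c ∈ B₁ → b ∈ B₂ → d ∈ B₂ → B₁ = B₂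

instance finpartitionFintype {n : ℕ} :
    Fintype (Finpartition (Finset.univ : Finset (Fin n))) :=
  Fintype.ofInjective Finpartition.parts fun _ _ h => Finpartition.ext h

variable {A : Type*} [Ring A] [Algebra ℂ A]

/-- The compound quantity `κ_π(a₁, …, aₙ)`: the product over the blocks of `π` of `κ`
evaluated on the entries of the block, taken in increasing order. -/
def cumPart (κ : ∀ n : ℕ, (Fin n → A) → ℂ) {n : ℕ}
    (π : Finpartition (Finset.univ : Finset (Fin n))) (a : Fin n → A) : ℂ :=
  ∏ B ∈ π.parts, κ B.card (fun i => a ((B.orderIsoOfFin rfl i : Fin n)))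

open scoped Classical in
/-- The family `κ` satisfies the moment–cumulant formula for `φ`:
`φ(a₁ ⋯ aₙ) = Σ_{π ∈ NC(n)} κ_π(a₁, …, aₙ)`. -/
def MomentCumulant (φ : A →ₗ[ℂ] ℂ) (κ : ∀ n : ℕ, (Fin n → A) → ℂ) : Prop :=
  ∀ n : ℕ, 0 < n → ∀ a : Fin n → A,
    φ (List.ofFn a).prod =
      ∑ π : Finpartition (Finset.univ : Finset (Fin n)),
        if IsNoncrossing π then cumPart κ π a else 0

end

/-! ### Noncrossing partitions of a finite linearly ordered set -/

section Combinatorics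
variable {ι : Type*} [LinearOrder ι]

/-- `P` is the set of blocks of a noncrossing partition of the finite set `s`. Sets of blocks are
used instead of `Finpartition` so that partitions of different sets can be cut and glued
without casts. -/
structure IsNCPart (s : Finset ι) (P : Finset (Finset ι)) : Prop where
  nonempty : ∀ B ∈ P, B.Nonempty
  eq_of_mem : ∀ B ∈ P, ∀ C ∈ P, ∀ x, x ∈ B → x ∈ C → B = C
  mem_iff : ∀ x, x ∈ s ↔ ∃ B ∈ P, x ∈ B
  noncrossing : ∀ a b c d : ι, a < b → b < c → c < d →
    ∀ B ∈ P, ∀ C ∈ P, a ∈ B → c ∈ B → b ∈ C → d ∈ C → B = C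

open scoped Classical in
/-- The finite set of all noncrossing partitions of `s`. -/
noncomputable def ncParts (s : Finset ι) : Finset (Finset (Finset ι)) :=
  s.powerset.powerset.filter (IsNCPart s)

lemma IsNCPart.subset {s : Finset ι} {P : Finset (Finset ι)} (h : IsNCPart s P)
    {B : Finset ι} (hB : B ∈ P) : B ⊆ s :=
  fun x hx => (h.mem_iff x).2 ⟨B, hB, hx⟩

lemma mem_ncParts {s : Finset ι} {P : Finset (Finset ι)} : P ∈ ncParts s ↔ IsNCPart s P := by
  classical
  simp only [ncParts, Finset.mem_filter, Finset.mem_powerset, and_iff_right_iff_imp]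
  intro h B hB
  exact Finset.mem_powerset.2 (h.subset hB)

/-- Every block of `P` lies inside `V` or is disjoint from `V`; when `V` is a subset of the set
partitioned by `P`, this says that `V` is a union of blocks of `P`. -/
def IsUnionOf (V : Finset ι) (P : Finset (Finset ι)) : Prop :=
  ∀ B ∈ P, B ⊆ V ∨ Disjoint B V

lemma isUnionOf_union {W V : Finset ι} {P Q : Finset (Finset ι)} (hP : ∀ B ∈ P, B ⊆ V)
    (hW : Disjoint W V) : IsUnionOf W (P ∪ Q) ↔ IsUnionOf W Q := by
  constructor
  · intro h B hB
    exact h B (Finset.mem_union_right _ hB)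
  · intro h B hB
    rcases Finset.mem_union.1 hB with hB | hB
    · exact Or.inr (hW.symm.mono_left (hP B hB))
    · exact h B hB

lemma IsNCPart.restrict {s V : Finset ι} {P : Finset (Finset ι)} (h : IsNCPart s P) (hV : V ⊆ s)
    (hU : IsUnionOf V P) : IsNCPart V (P.filter (· ⊆ V)) where
  nonempty B hB := h.nonempty B (Finset.mem_filter.1 hB).1
  eq_of_mem B hB C hC := h.eq_of_mem B (Finset.mem_filter.1 hB).1 C (Finset.mem_filter.1 hC).1
  mem_iff x := by
    constructor
    · intro hx
      obtain ⟨B, hB, hxB⟩ := (h.mem_iff x).1 (hV hx)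
      refine ⟨B, Finset.mem_filter.2 ⟨hB, (hU B hB).resolve_right ?_⟩, hxB⟩
      exact fun hd => Finset.disjoint_left.1 hd hxB hx
    · rintro ⟨B, hB, hxB⟩
      exact (Finset.mem_filter.1 hB).2 hxB
  noncrossing a b c d hab hbc hcd B hB C hC :=
    h.noncrossing a b c d hab hbc hcd B (Finset.mem_filter.1 hB).1 C (Finset.mem_filter.1 hC).1

lemma IsNCPart.restrict_compl {s V : Finset ι} {P : Finset (Finset ι)} (h : IsNCPart s P)
    (hU : IsUnionOf V P) : IsNCPart (s \ V) (P.filter (¬ · ⊆ V)) where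
  nonempty B hB := h.nonempty B (Finset.mem_filter.1 hB).1
  eq_of_mem B hB C hC := h.eq_of_mem B (Finset.mem_filter.1 hB).1 C (Finset.mem_filter.1 hC).1
  mem_iff x := by
    constructor
    · intro hx
      obtain ⟨hxs, hxV⟩ := Finset.mem_sdiff.1 hx
      obtain ⟨B, hB, hxB⟩ := (h.mem_iff x).1 hxs
      exact ⟨B, Finset.mem_filter.2 ⟨hB, fun hBV => hxV (hBV hxB)⟩, hxB⟩
    · rintro ⟨B, hB, hxB⟩
      obtain ⟨hB, hBV⟩ := Finset.mem_filter.1 hB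
      exact Finset.mem_sdiff.2 ⟨h.subset hB hxB,
        Finset.disjoint_left.1 ((hU B hB).resolve_left hBV) hxB⟩
  noncrossing a b c d hab hbc hcd B hB C hC :=
    h.noncrossing a b c d hab hbc hcd B (Finset.mem_filter.1 hB).1 C (Finset.mem_filter.1 hC).1

/-- A noncrossing partition of an interval `V` of `s` and one of `s \ V` together form a noncrossing
partition of `s`. -/
lemma IsNCPart.union {s V : Finset ι} {P Q : Finset (Finset ι)} (hVs : V ⊆ s)
    (hconv : ∀ x ∈ V, ∀ z ∈ V, ∀ y ∈ s, x < y → y < z → y ∈ V)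
    (hP : IsNCPart V P) (hQ : IsNCPart (s \ V) Q) : IsNCPart s (P ∪ Q) := by
  have key : ∀ B ∈ P, ∀ C ∈ Q, ∀ x, x ∈ B → x ∉ C := fun B hB C hC x hxB hxC =>
    (Finset.mem_sdiff.1 (hQ.subset hC hxC)).2 (hP.subset hB hxB)
  refine ⟨?_, ?_, ?_, ?_⟩
  · intro B hB
    rcases Finset.mem_union.1 hB with hB | hB
    exacts [hP.nonempty B hB, hQ.nonempty B hB]
  · intro B hB C hC x hxB hxC
    rcases Finset.mem_union.1 hB with hB | hB <;> rcases Finset.mem_union.1 hC with hC | hC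
    · exact hP.eq_of_mem B hB C hC x hxB hxC
    · exact absurd hxC (key B hB C hC x hxB)
    · exact absurd hxB (key C hC B hB x hxC)
    · exact hQ.eq_of_mem B hB C hC x hxB hxC
  · intro x
    constructor
    · intro hx
      by_cases hxV : x ∈ V
      · obtain ⟨B, hB, hxB⟩ := (hP.mem_iff x).1 hxV
        exact ⟨B, Finset.mem_union_left _ hB, hxB⟩
      · obtain ⟨B, hB, hxB⟩ := (hQ.mem_iff x).1 (Finset.mem_sdiff.2 ⟨hx, hxV⟩)
        exact ⟨B, Finset.mem_union_right _ hB, hxB⟩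
    · rintro ⟨B, hB, hxB⟩
      rcases Finset.mem_union.1 hB with hB | hB
      · exact hVs (hP.subset hB hxB)
      · exact (Finset.mem_sdiff.1 (hQ.subset hB hxB)).1
  · intro a b c d hab hbc hcd B hB C hC ha hc hb hd
    rcases Finset.mem_union.1 hB with hB | hB <;> rcases Finset.mem_union.1 hC with hC | hC
    · exact hP.noncrossing a b c d hab hbc hcd B hB C hC ha hc hb hd
    · have hb' := Finset.mem_sdiff.1 (hQ.subset hC hb)
      exact absurd (hconv a (hP.subset hB ha) c (hP.subset hB hc) b hb'.1 hab hbc) hb'.2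
    · have hc' := Finset.mem_sdiff.1 (hQ.subset hB hc)
      exact absurd (hconv b (hP.subset hC hb) d (hP.subset hC hd) c hc'.1 hbc hcd) hc'.2
    · exact hQ.noncrossing a b c d hab hbc hcd B hB C hC ha hc hb hd

open scoped Classical in
/-- If `V` is an interval of `s`, the noncrossing partitions of `s` having `V` as a union of blocks
are the pairs of a noncrossing partition of `V` and one of `s \ V`, so a sum of multiplicative
weights factorizes. The condition indexed by `T` only concerns sets disjoint from `V`, hence only
the second factor. -/
lemma sum_ncParts_split (k : Finset ι → ℂ) {s V : Finset ι} (hVs : V ⊆ s)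
    (hconv : ∀ x ∈ V, ∀ z ∈ V, ∀ y ∈ s, x < y → y < z → y ∈ V)
    (T : Set (Finset ι)) (hT : ∀ W ∈ T, Disjoint W V) :
    ∑ P ∈ (ncParts s).filter (fun P => IsUnionOf V P ∧ ∀ W ∈ T, ¬ IsUnionOf W P), ∏ B ∈ P, k B =
      (∑ P ∈ ncParts V, ∏ B ∈ P, k B) *
        ∑ P ∈ (ncParts (s \ V)).filter (fun P => ∀ W ∈ T, ¬ IsUnionOf W P), ∏ B ∈ P, k B := by
  rw [Finset.sum_mul_sum, ← Finset.sum_product']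
  symm
  refine Finset.sum_bij' (fun p _ => p.1 ∪ p.2)
    (fun P _ => (P.filter (· ⊆ V), P.filter (¬ · ⊆ V))) ?_ ?_ ?_ ?_ ?_
  · rintro ⟨P, Q⟩ h
    simp only [Finset.mem_product, Finset.mem_filter, mem_ncParts] at h ⊢
    obtain ⟨hP, hQ, hQT⟩ := h
    refine ⟨IsNCPart.union hVs hconv hP hQ, ?_, ?_⟩
    · intro B hB
      rcases Finset.mem_union.1 hB with hB | hB
      · exact Or.inl (hP.subset hB)
      · exact Or.inr (Finset.sdiff_disjoint.mono_left (hQ.subset hB))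
    · intro W hW hU
      exact hQT W hW ((isUnionOf_union (fun B hB => hP.subset hB) (hT W hW)).1 hU)
  · intro P h
    simp only [Finset.mem_product, Finset.mem_filter, mem_ncParts] at h ⊢
    obtain ⟨hP, hU, hPT⟩ := h
    refine ⟨hP.restrict hVs hU, hP.restrict_compl hU, ?_⟩
    intro W hW hUW
    refine hPT W hW ?_
    rw [← Finset.filter_union_filter_not_eq (· ⊆ V) P]
    exact (isUnionOf_union (fun B hB => (Finset.mem_filter.1 hB).2) (hT W hW)).2 hUW
  · rintro ⟨P, Q⟩ h
    simp only [Finset.mem_product, Finset.mem_filter, mem_ncParts] at h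
    obtain ⟨hP, hQ, -⟩ := h
    have h1 : ∀ B ∈ P, B ⊆ V := fun B hB => hP.subset hB
    have h2 : ∀ B ∈ Q, ¬ B ⊆ V := by
      intro B hB hBV
      obtain ⟨x, hx⟩ := hQ.nonempty B hB
      exact (Finset.mem_sdiff.1 (hQ.subset hB hx)).2 (hBV hx)
    simp only [Finset.filter_union, Prod.mk.injEq]
    rw [Finset.filter_true_of_mem h1, Finset.filter_false_of_mem h2,
      Finset.filter_false_of_mem (fun B hB => not_not.2 (h1 B hB)), Finset.filter_true_of_mem h2]
    simp
  · intro P _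
    exact Finset.filter_union_filter_not_eq (· ⊆ V) P
  · rintro ⟨P, Q⟩ h
    simp only [Finset.mem_product, Finset.mem_filter, mem_ncParts] at h
    obtain ⟨hP, hQ, -⟩ := h
    refine (Finset.prod_union ?_).symm
    rw [Finset.disjoint_left]
    intro B hB hB'
    obtain ⟨x, hx⟩ := hQ.nonempty B hB'
    exact (Finset.mem_sdiff.1 (hQ.subset hB' hx)).2 (hP.subset hB hx)

end Combinatorics

/-! ### Cumulants of words and moments of products of centred chunks -/

section Moments
variable {A : Type*}

/-- The cumulant of the entries of a list. -/
def listCum (κ : ∀ n : ℕ, (Fin n → A) → ℂ) (l : List A) : ℂ := κ l.length l.get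

/-- The factor of `κ_P` belonging to the block `B`: the cumulant of the entries of `w` at the
positions in `B`, taken in increasing order. -/
def blockCum (κ : ∀ n : ℕ, (Fin n → A) → ℂ) {ι : Type*} [LinearOrder ι] (w : ι → A)
    (B : Finset ι) : ℂ := listCum κ (B.sort.map w)

lemma cum_eq_listCum (κ : ∀ n : ℕ, (Fin n → A) → ℂ) {m : ℕ} (f : Fin m → A) (l : List A)
    (h : List.ofFn f = l) : κ m f = listCum κ l := by
  have aux : ∀ (l : List A) (hl : l.length = m), (f = fun i => l.get (i.cast hl.symm)) →
      κ m f = listCum κ l := by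
    rintro l rfl rfl
    rfl
  subst h
  exact aux _ (List.length_ofFn) (by ext i; simp)

lemma cumPart_eq [Ring A] [Algebra ℂ A] (κ : ∀ n : ℕ, (Fin n → A) → ℂ) {n : ℕ}
    (π : Finpartition (Finset.univ : Finset (Fin n))) (w : Fin n → A) :
    cumPart κ π w = ∏ B ∈ π.parts, blockCum κ w B := by
  refine Finset.prod_congr rfl fun B _ => cum_eq_listCum κ _ _ ?_
  refine List.ext_getElem (by simp) fun i h₁ h₂ => ?_
  simp [Finset.orderEmbOfFin_apply]

lemma isNCPart_parts {n : ℕ} {π : Finpartition (Finset.univ : Finset (Fin n))}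
    (hπ : IsNoncrossing π) : IsNCPart Finset.univ π.parts where
  nonempty B hB := π.nonempty_of_mem_parts hB
  eq_of_mem B hB C hC x hxB hxC := π.eq_of_mem_parts hB hC hxB hxC
  mem_iff x := by
    obtain ⟨B, hB, hx⟩ := π.exists_mem (Finset.mem_univ x)
    simp only [Finset.mem_univ, true_iff]
    exact ⟨B, hB, hx⟩
  noncrossing := hπ

lemma exists_finpartition {n : ℕ} {P : Finset (Finset (Fin n))}
    (hP : IsNCPart Finset.univ P) :
    ∃ π : Finpartition (Finset.univ : Finset (Fin n)), IsNoncrossing π ∧ π.parts = P := by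
  refine ⟨⟨P, ?_, ?_, ?_⟩, hP.noncrossing, rfl⟩
  · rw [Finset.supIndep_iff_pairwiseDisjoint]
    intro B hB C hC hBC
    rw [Function.onFun, id, id, Finset.disjoint_left]
    exact fun x hxB hxC => hBC (hP.eq_of_mem B hB C hC x hxB hxC)
  · ext x
    simpa [Finset.mem_sup] using hP.mem_iff x
  · intro h
    exact Finset.not_nonempty_empty (hP.nonempty _ h)

lemma IsNCPart.map {ι κ : Type*} [LinearOrder ι] [LinearOrder κ] (f : ι ↪o κ) {s : Finset ι}
    {P : Finset (Finset ι)} (h : IsNCPart s P) :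
    IsNCPart (s.map f.toEmbedding) (P.map (Finset.mapEmbedding f.toEmbedding).toEmbedding) where
  nonempty := by
    simp only [Finset.mem_map]
    rintro _ ⟨B, hB, rfl⟩
    exact (h.nonempty B hB).map
  eq_of_mem := by
    simp only [Finset.mem_map]
    rintro _ ⟨B, hB, rfl⟩ _ ⟨C, hC, rfl⟩ x hx hx'
    obtain ⟨y, hy, rfl⟩ := Finset.mem_map.1 hx
    rw [h.eq_of_mem B hB C hC y hy (by simpa using hx')]
  mem_iff x := by
    constructor
    · intro hx
      obtain ⟨y, hy, rfl⟩ := Finset.mem_map.1 hx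
      obtain ⟨B, hB, hyB⟩ := (h.mem_iff y).1 hy
      exact ⟨_, Finset.mem_map_of_mem _ hB, Finset.mem_map_of_mem _ hyB⟩
    · rintro ⟨_, hB, hx⟩
      obtain ⟨B, hB', rfl⟩ := Finset.mem_map.1 hB
      obtain ⟨y, hy, rfl⟩ := Finset.mem_map.1 hx
      exact Finset.mem_map_of_mem _ ((h.mem_iff y).2 ⟨B, hB', hy⟩)
  noncrossing := by
    simp only [Finset.mem_map]
    rintro a b c d hab hbc hcd _ ⟨B, hB, rfl⟩ _ ⟨C, hC, rfl⟩ ha hc hb hd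
    obtain ⟨a, ha', rfl⟩ := Finset.mem_map.1 ha
    obtain ⟨b, hb', rfl⟩ := Finset.mem_map.1 hb
    obtain ⟨c, hc', rfl⟩ := Finset.mem_map.1 hc
    obtain ⟨d, hd', rfl⟩ := Finset.mem_map.1 hd
    rw [h.noncrossing a b c d (by simpa using hab) (by simpa using hbc) (by simpa using hcd)
      B hB C hC ha' hc' hb' hd']

lemma IsNCPart.exists_map {ι κ : Type*} [LinearOrder ι] [LinearOrder κ] (f : ι ↪o κ) {s : Finset ι}
    {Q : Finset (Finset κ)} (h : IsNCPart (s.map f.toEmbedding) Q) :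
    ∃ P, IsNCPart s P ∧ P.map (Finset.mapEmbedding f.toEmbedding).toEmbedding = Q := by
  classical
  have hmap : ∀ B ∈ Q, (s.filter (f · ∈ B)).map f.toEmbedding = B := by
    intro B hB
    ext x
    simp only [Finset.mem_map, Finset.mem_filter]
    constructor
    · rintro ⟨y, ⟨-, hy⟩, rfl⟩
      exact hy
    · intro hx
      obtain ⟨y, hy, rfl⟩ := Finset.mem_map.1 (h.subset hB hx)
      exact ⟨y, ⟨hy, hx⟩, rfl⟩
  refine ⟨Q.image fun B => s.filter (f · ∈ B), ⟨?_, ?_, ?_, ?_⟩, ?_⟩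
  · simp only [Finset.mem_image]
    rintro _ ⟨B, hB, rfl⟩
    have := h.nonempty B hB
    rw [← hmap B hB] at this
    exact Finset.map_nonempty.1 this
  · simp only [Finset.mem_image]
    rintro _ ⟨B, hB, rfl⟩ _ ⟨C, hC, rfl⟩ x hx hx'
    rw [h.eq_of_mem B hB C hC (f x) (Finset.mem_filter.1 hx).2 (Finset.mem_filter.1 hx').2]
  · intro x
    constructor
    · intro hx
      obtain ⟨B, hB, hxB⟩ := (h.mem_iff (f x)).1 (Finset.mem_map_of_mem _ hx)
      exact ⟨_, Finset.mem_image_of_mem _ hB, Finset.mem_filter.2 ⟨hx, hxB⟩⟩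
    · rintro ⟨_, hB, hx⟩
      obtain ⟨B, hB, rfl⟩ := Finset.mem_image.1 hB
      exact (Finset.mem_filter.1 hx).1
  · simp only [Finset.mem_image]
    rintro a b c d hab hbc hcd _ ⟨B, hB, rfl⟩ _ ⟨C, hC, rfl⟩ ha hc hb hd
    simp only [Finset.mem_filter] at ha hb hc hd
    rw [h.noncrossing (f a) (f b) (f c) (f d) (by simpa using hab) (by simpa using hbc)
      (by simpa using hcd) B hB C hC ha.2 hc.2 hb.2 hd.2]
  · ext B
    simp only [Finset.mem_map, Finset.mem_image]
    constructor
    · rintro ⟨_, ⟨C, hC, rfl⟩, rfl⟩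
      change (s.filter (f · ∈ C)).map f.toEmbedding ∈ Q
      rwa [hmap C hC]
    · intro hB
      exact ⟨_, ⟨B, hB, rfl⟩, hmap B hB⟩

lemma blockCum_map (κ : ∀ n : ℕ, (Fin n → A) → ℂ) {ι τ : Type*} [LinearOrder ι] [LinearOrder τ]
    (f : ι ↪o τ) (w : τ → A) (B : Finset ι) :
    blockCum κ w (B.map f.toEmbedding) = blockCum κ (w ∘ f) B := by
  have := (f.strictMono.strictMonoOn (B : Set ι)).map_finsetSort (f := f.toEmbedding)
  rw [blockCum, blockCum, ← this, List.map_map]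
  rfl

variable [Ring A] [Algebra ℂ A]

/-- The moment–cumulant formula for a word indexed by an arbitrary finite linearly ordered set,
including the empty one. -/
lemma moment_formula {φ : A →ₗ[ℂ] ℂ} (h1 : φ 1 = 1) {κ : ∀ n : ℕ, (Fin n → A) → ℂ}
    (hκ : MomentCumulant φ κ) {ι : Type*} [LinearOrder ι] (w : ι → A) (l : List ι)
    (hl : l.SortedLT) :
    φ (l.map w).prod = ∑ P ∈ ncParts l.toFinset, ∏ B ∈ P, blockCum κ w B := by
  classical
  rcases Nat.eq_zero_or_pos l.length with h0 | hpos
  · rw [List.length_eq_zero_iff] at h0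
    subst h0
    have : ncParts (∅ : Finset ι) = {∅} := by
      ext P
      rw [mem_ncParts, Finset.mem_singleton]
      constructor
      · intro h
        refine Finset.eq_empty_of_forall_notMem fun B hB => ?_
        obtain ⟨x, hx⟩ := h.nonempty B hB
        exact Finset.notMem_empty _ (h.subset hB hx)
      · rintro rfl
        exact ⟨by simp, by simp, by simp, by simp⟩
    simp [this, h1]
  · let f : Fin l.length ↪o ι := OrderEmbedding.ofStrictMono l.get hl.strictMono_get
    have hf : (Finset.univ : Finset (Fin l.length)).map f.toEmbedding = l.toFinset := by
      ext x
      simp [f, List.mem_iff_get]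
    have hw : l.map w = List.ofFn (w ∘ f) := by
      refine List.ext_getElem (by simp) fun i h₁ h₂ => by simp [f]
    rw [hw, hκ _ hpos, ← Finset.sum_filter, ← hf]
    refine Finset.sum_bij
      (fun π _ => π.parts.map (Finset.mapEmbedding f.toEmbedding).toEmbedding) ?_ ?_ ?_ ?_
    · intro π hπ
      exact mem_ncParts.2 ((isNCPart_parts (Finset.mem_filter.1 hπ).2).map f)
    · intro π _ π' _ h
      exact Finpartition.ext (Finset.map_injective _ h)
    · intro Q hQ
      obtain ⟨P, hP, rfl⟩ := (mem_ncParts.1 hQ).exists_map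
      obtain ⟨π, hπ, rfl⟩ := exists_finpartition hP
      exact ⟨π, Finset.mem_filter.2 ⟨Finset.mem_univ _, hπ⟩, rfl⟩
    · intro π _
      rw [cumPart_eq, Finset.prod_map]
      refine Finset.prod_congr rfl fun B _ => ?_
      exact (blockCum_map κ f w B).symm

/-- The product of the words `w(v)`, one factor for each `(v, c)` in `L`, where a factor with `c = true`
is centred, that is, replaced by `w(v) - φ(w(v))`. -/
noncomputable def centredProd (φ : A →ₗ[ℂ] ℂ) {ι : Type*} (w : ι → A)
    (L : List (List ι × Bool)) : A :=
  (L.map fun p => (p.1.map w).prod -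
    if p.2 then algebraMap ℂ A (φ (p.1.map w).prod) else 0).prod

open scoped Classical in
/-- Centring some of the chunks of a word removes from the moment–cumulant formula exactly those
noncrossing partitions for which a centred chunk is a union of blocks. The induction is on the
number of centred chunks: uncentring one of them costs `φ(w(v))` times the moment of the remaining
word, which by `sum_ncParts_split` is the sum over the partitions having `v` as a union of
blocks. -/
lemma centred_moment {φ : A →ₗ[ℂ] ℂ} (h1 : φ 1 = 1) {κ : ∀ n : ℕ, (Fin n → A) → ℂ}
    (hκ : MomentCumulant φ κ) {ι : Type*} [LinearOrder ι] (w : ι → A) (N : ℕ) :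
    ∀ L : List (List ι × Bool), (L.map Prod.snd).count true = N →
      (L.map Prod.fst).flatten.SortedLT →
    φ (centredProd φ w L) =
      ∑ P ∈ (ncParts (L.map Prod.fst).flatten.toFinset).filter
        (fun P => ∀ W ∈ {W | ∃ v, (v, true) ∈ L ∧ v.toFinset = W}, ¬ IsUnionOf W P),
        ∏ B ∈ P, blockCum κ w B := by
  induction N with
  | zero =>
    intro L hL hs
    have hT : ∀ v, (v, true) ∉ L := by
      intro v hv
      exact List.count_eq_zero.1 hL (List.mem_map.2 ⟨_, hv, rfl⟩)
    rw [Finset.filter_true_of_mem, ← moment_formula h1 hκ w _ hs]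
    · congr 1
      rw [List.map_flatten, List.prod_flatten, centredProd, List.map_map, List.map_map]
      congr 1
      refine List.map_congr_left fun p hp => ?_
      obtain ⟨v, b⟩ := p
      cases b
      · simp
      · exact absurd hp (hT v)
    · rintro P - W ⟨v, hv, -⟩
      exact absurd hv (hT v)
  | succ N ih =>
    intro L hL hs
    obtain ⟨v, hv⟩ : ∃ v, (v, true) ∈ L := by
      have : true ∈ L.map Prod.snd := List.count_pos_iff.1 (by omega)
      obtain ⟨⟨v, b⟩, hp, rfl⟩ := List.mem_map.1 this
      exact ⟨v, hp⟩
    obtain ⟨L₁, L₂, rfl⟩ := List.append_of_mem hv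
    have e₁ : centredProd φ w (L₁ ++ (v, true) :: L₂) =
        centredProd φ w (L₁ ++ (v, false) :: L₂) -
          φ (v.map w).prod • centredProd φ w (L₁ ++ L₂) := by
      simp [centredProd, sub_mul, mul_sub, Algebra.algebraMap_eq_smul_one]
    have hsort : (L₁.map Prod.fst).flatten ++ (v ++ (L₂.map Prod.fst).flatten) =
      ((L₁ ++ (v, true) :: L₂).map Prod.fst).flatten := by simp
    rw [← hsort] at hs
    have hp := hs.pairwise
    have hsv : v.SortedLT := by
      refine List.Pairwise.sortedLT (hp.sublist ?_)
      exact (List.sublist_append_left _ _).trans (List.sublist_append_right _ _)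
    have hs' : ((L₁ ++ L₂).map Prod.fst).flatten.SortedLT := by
      refine List.Pairwise.sortedLT (hp.sublist ?_)
      simp
    rw [List.pairwise_append] at hp
    obtain ⟨-, hp2, hp3⟩ := hp
    rw [List.pairwise_append] at hp2
    obtain ⟨-, -, hp4⟩ := hp2
    set T : Set (Finset ι) := {W | ∃ u, (u, true) ∈ L₁ ++ L₂ ∧ u.toFinset = W} with hTdef
    have hmem : ∀ u b, (u, b) ∈ L₁ ++ L₂ → ∀ x ∈ u,
        x ∈ (L₁.map Prod.fst).flatten ∨ x ∈ (L₂.map Prod.fst).flatten := by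
      intro u b hu x hx
      rcases List.mem_append.1 hu with hu | hu
      · exact Or.inl (List.mem_flatten.2 ⟨u, List.mem_map.2 ⟨_, hu, rfl⟩, hx⟩)
      · exact Or.inr (List.mem_flatten.2 ⟨u, List.mem_map.2 ⟨_, hu, rfl⟩, hx⟩)
    have hdisj : ∀ x ∈ v, ¬ (x ∈ (L₁.map Prod.fst).flatten ∨ x ∈ (L₂.map Prod.fst).flatten) := by
      rintro x hx (h | h)
      · exact lt_irrefl _ (hp3 x h x (List.mem_append_left _ hx))
      · exact lt_irrefl _ (hp4 x hx x h)
    have hT : ∀ W ∈ T, Disjoint W v.toFinset := by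
      rintro _ ⟨u, hu, rfl⟩
      rw [Finset.disjoint_left]
      intro x hx hxv
      exact hdisj x (List.mem_toFinset.1 hxv) (hmem u true hu x (List.mem_toFinset.1 hx))
    have hVs : v.toFinset ⊆ ((L₁ ++ (v, true) :: L₂).map Prod.fst).flatten.toFinset := by
      rw [← hsort]
      intro x hx
      simp only [List.mem_toFinset, List.mem_append] at hx ⊢
      exact Or.inr (Or.inl hx)
    have hconv : ∀ x ∈ v.toFinset, ∀ z ∈ v.toFinset,
        ∀ y ∈ ((L₁ ++ (v, true) :: L₂).map Prod.fst).flatten.toFinset,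
        x < y → y < z → y ∈ v.toFinset := by
      rw [← hsort]
      intro x hx z hz y hy hxy hyz
      simp only [List.mem_toFinset, List.mem_append] at hx hy hz ⊢
      rcases hy with hy | hy | hy
      · exact absurd hxy (hp3 y hy x (List.mem_append_left _ hx)).asymm
      · exact hy
      · exact absurd hyz (hp4 z hz y hy).asymm
    have hdiff : ((L₁ ++ (v, true) :: L₂).map Prod.fst).flatten.toFinset \ v.toFinset =
        ((L₁ ++ L₂).map Prod.fst).flatten.toFinset := by
      rw [← hsort]
      ext x
      have := hdisj x
      simp only [Finset.mem_sdiff, List.mem_toFinset, List.mem_append, List.map_append,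
        List.flatten_append]
      tauto
    have hsplit := sum_ncParts_split (blockCum κ w) hVs hconv T hT
    rw [hdiff, ← moment_formula h1 hκ w v hsv, ← ih (L₁ ++ L₂) (by simp at hL ⊢; omega) hs']
      at hsplit
    have hfalse := ih (L₁ ++ (v, false) :: L₂) (by simp at hL ⊢; omega) (by simpa using hs)
    rw [e₁, map_sub, map_smul, smul_eq_mul, ← hsplit, hfalse]
    have hset : {W | ∃ u, (u, true) ∈ L₁ ++ (v, false) :: L₂ ∧ u.toFinset = W} = T := by
      ext W
      simp [hTdef]
    have hsupp : ((L₁ ++ (v, false) :: L₂).map Prod.fst).flatten.toFinset =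
      ((L₁ ++ (v, true) :: L₂).map Prod.fst).flatten.toFinset := by simp
    rw [hset, hsupp, sub_eq_iff_eq_add]
    refine (Finset.sum_filter_add_sum_filter_not
      ((ncParts ((L₁ ++ (v, true) :: L₂).map Prod.fst).flatten.toFinset).filter
        (fun P => ∀ W ∈ T, ¬ IsUnionOf W P)) (fun P => IsUnionOf v.toFinset P) _).symm.trans ?_
    rw [Finset.filter_filter, Finset.filter_filter, add_comm]
    refine congrArg₂ (· + ·) ?_ ?_
    · refine Finset.sum_congr (Finset.filter_congr fun P _ => ?_) fun _ _ => rfl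
      constructor
      · rintro ⟨h, h'⟩ _ ⟨u, hu, rfl⟩
        simp only [List.mem_append, List.mem_cons, Prod.mk.injEq, and_true] at hu
        rcases hu with hu | rfl | hu
        · exact h _ ⟨u, List.mem_append_left _ hu, rfl⟩
        · exact h'
        · exact h _ ⟨u, List.mem_append_right _ hu, rfl⟩
      · intro h
        refine ⟨?_, h _ ⟨v, by simp, rfl⟩⟩
        rintro _ ⟨u, hu, rfl⟩
        refine h _ ⟨u, ?_, rfl⟩
        simp only [List.mem_append, List.mem_cons] at hu ⊢
        tauto
    · refine Finset.sum_congr (Finset.filter_congr fun P _ => ?_) fun _ _ => rfl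
      exact and_comm

end Moments

/-! ### Moments of alternating chunks in an R-diagonal element -/

section RDiagonal
variable {A : Type*} [Ring A] [Algebra ℂ A] [StarRing A]

/-- The index of `Pset` attached to a letter: an element of `Pset D E a i j` is a combination of
alternating words starting with the letter of index `i` and ending with the letter of index `j`. -/
def letterIndex (b : Bool) : Fin 2 := if b then 1 else 0

/-- The entries of the list lie in `P_{i i₂}, P_{i₂ i₃}, …` for some indices `i₂, i₃, …`, so that
`R`-diagonality applies to their product. -/
def Admissible (φ : A →ₗ[ℂ] ℂ) (a : A) : Fin 2 → List A → Prop
  | _, [] => True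
  | i, x :: L => ∃ j, x ∈ Pset (scalarD A) (scalarE φ) a i j ∧ Admissible φ a j L

lemma Admissible.exists_index {φ : A →ₗ[ℂ] ℂ} {a : A} : ∀ {i : Fin 2} {L : List A},
    Admissible φ a i L → ∃ f : Fin (L.length + 1) → Fin 2, f 0 = i ∧
      ∀ k : Fin L.length, L.get k ∈ Pset (scalarD A) (scalarE φ) a (f k.castSucc) (f k.succ)
  | i, [], _ => ⟨fun _ => i, rfl, fun k => k.elim0⟩
  | i, x :: L, ⟨j, hx, hL⟩ => by
    obtain ⟨f, hf0, hf⟩ := hL.exists_index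
    refine ⟨Fin.cons i f, rfl, fun k => ?_⟩
    refine Fin.cases ?_ (fun k => ?_) k
    · rw [← hf0] at hx
      exact hx
    · exact hf k

lemma Admissible.moment_eq_zero [StarModule ℂ A] {φ : A →ₗ[ℂ] ℂ} (h1 : φ 1 = 1) {a : A}
    (ha : RDiag φ a) {i : Fin 2} {L : List A} (hL : Admissible φ a i L) (hne : L ≠ []) : φ L.prod = 0 := by
  obtain ⟨f, -, hf⟩ := hL.exists_index
  have h := ha L.length (List.length_pos_iff.2 hne) f L.get hf
  rw [List.ofFn_get] at h
  have h' := congrArg φ h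
  simpa [scalarE, Algebra.algebraMap_eq_smul_one, h1] using h'

lemma altList_of_isChain : ∀ (b : Bool) (l : List Bool), (b :: l).IsChain (· ≠ ·) →
    b :: l = altList b (l.length + 1)
  | b, [], _ => rfl
  | b, c :: l, h => by
    rw [List.isChain_cons_cons] at h
    have hc : c = !b := by cases b <;> cases c <;> simp_all
    have ih := altList_of_isChain c l h.2
    change b :: (c :: l) = b :: altList (!b) (l.length + 1)
    rw [← hc]
    exact congrArg (b :: ·) ih

lemma getLast_of_isChain : ∀ (b : Bool) (l : List Bool), (b :: l).IsChain (· ≠ ·) →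
    (b :: l).getLast (List.cons_ne_nil _ _) = if Even (l.length + 1) then !b else b
  | b, [], _ => by simp
  | b, c :: l, h => by
    rw [List.isChain_cons_cons] at h
    have hc : c = !b := by cases b <;> cases c <;> simp_all
    rw [List.getLast_cons (List.cons_ne_nil _ _), getLast_of_isChain c l h.2, hc,
      List.length_cons]
    by_cases he : Even (l.length + 1)
    · rw [if_pos he, if_neg (fun h => Nat.even_add_one.1 h he), Bool.not_not]
    · rw [if_neg he, if_pos (Nat.even_add_one.2 he)]

lemma prod_mem_wordSet (a : A) : ∀ l : List Bool,
    (l.map (letter a)).prod ∈ wordSet (scalarD A) a l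
  | [] => ⟨1, by simp⟩
  | b :: l => ⟨1, ⟨1, by simp⟩, _, prod_mem_wordSet a l, by simp⟩

/-- An alternating word, centred when its length is even, lies in the set `Pset` prescribed by its
first and last letters. -/
lemma chunk_mem_Pset {φ : A →ₗ[ℂ] ℂ} (h1 : φ 1 = 1) (a : A) (l : List Bool) (hne : l ≠ [])
    (hl : l.IsChain (· ≠ ·)) :
    (l.map (letter a)).prod -
        (if decide (Even l.length) then algebraMap ℂ A (φ (l.map (letter a)).prod) else 0) ∈
      Pset (scalarD A) (scalarE φ) a (letterIndex (l.head hne)) (letterIndex (l.getLast hne)) := by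
  obtain ⟨b, l, rfl⟩ := List.exists_cons_of_ne_nil hne
  have hw := prod_mem_wordSet a (b :: l)
  set x := ((b :: l).map (letter a)).prod with hx
  rw [getLast_of_isChain b l hl, List.head_cons, List.length_cons]
  rw [altList_of_isChain b l hl] at hw
  by_cases he : Even (l.length + 1)
  · obtain ⟨m, hm⟩ := he
    have hE : scalarE φ (x - algebraMap ℂ A (φ x)) = 0 := by
      simp [scalarE, Algebra.algebraMap_eq_smul_one, h1]
    have hmem : x - algebraMap ℂ A (φ x) ∈
        Submodule.span ℂ (⋃ m : ℕ, wordSet (scalarD A) a (altList b (2 * m))) := by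
      refine sub_mem (Submodule.subset_span (Set.mem_iUnion.2 ⟨m, ?_⟩))
        (Submodule.subset_span (Set.mem_iUnion.2 ⟨0, ?_⟩))
      · rwa [two_mul, ← hm]
      · exact ⟨φ x, rfl⟩
    have he : Even (l.length + 1) := ⟨m, hm⟩
    simp only [he, decide_true, if_true]
    cases b
    · exact ⟨hmem, hE⟩
    · exact ⟨hmem, hE⟩
  · obtain ⟨m, hm⟩ := Nat.not_even_iff_odd.1 he
    have hmem : x ∈
        Submodule.span ℂ (⋃ m : ℕ, wordSet (scalarD A) a (altList b (2 * m + 1))) := by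
      refine Submodule.subset_span (Set.mem_iUnion.2 ⟨m, ?_⟩)
      rwa [← hm]
    simp only [he, decide_false, Bool.false_eq_true, if_false, sub_zero]
    cases b
    · exact hmem
    · exact hmem

/-- Cutting a word between equal adjacent letters into alternating chunks, and centring the chunks
of even length, gives a product to which `R`-diagonality applies. -/
lemma admissible_chunks {φ : A →ₗ[ℂ] ℂ} (h1 : φ 1 = 1) (a : A) {ι : Type*} (b : ι → Bool) :
    ∀ (L : List (List ι)), [] ∉ L → (∀ C ∈ L, C.IsChain fun x y => b x ≠ b y) →
      (L.IsChain fun C C' => ∀ x ∈ C.getLast?, ∀ y ∈ C'.head?, b x = b y) →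
      ∀ i : Fin 2, (∀ C ∈ L.head?, ∀ x ∈ C.head?, i = letterIndex (b x)) →
      Admissible φ a i (L.map fun C => (C.map fun x => letter a (b x)).prod -
        if decide (Even C.length) then
          algebraMap ℂ A (φ (C.map fun x => letter a (b x)).prod) else 0)
  | [], _, _, _, _, _ => trivial
  | C :: L, hne, hch, hadj, i, hi => by
    have hC : C ≠ [] := fun h => hne (by simp [h])
    have hCb : C.map b ≠ [] := by simpa using hC
    have hmem := chunk_mem_Pset h1 a (C.map b) hCb
      ((List.isChain_map b).2 (hch C (by simp)))
    rw [List.map_map, List.length_map] at hmem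
    have hi' : i = letterIndex ((C.map b).head hCb) := by
      rw [List.head_map]
      exact hi C (by simp) _ (List.head_mem_head? hC)
    rw [← hi'] at hmem
    refine ⟨_, hmem, ?_⟩
    rw [List.isChain_cons] at hadj
    refine admissible_chunks h1 a b L (fun h => hne (List.mem_cons_of_mem _ h))
      (fun D hD => hch D (List.mem_cons_of_mem _ hD)) hadj.2 _ ?_
    intro D hD y hy
    rw [List.getLast_map]
    rw [hadj.1 D hD _ (List.getLast_mem_getLast? hC) y hy]

end RDiagonal

/-! ### Levels and alternating blocks -/

section Levels

/-- The exponent `±1` of a letter: `1` for `a`, `-1` for `star a`. -/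
def sgn (b : Bool) : ℤ := if b then 1 else -1

variable {ι : Type*} [LinearOrder ι]

/-- The letters of the word `b` at the positions in `B` alternate and are even in number. -/
def IsAlternating (b : ι → Bool) (B : Finset ι) : Prop :=
  (B.sort.map b).IsChain (· ≠ ·) ∧ Even B.card

/-- Twice the quantity `∑_{k < i} t k + t i / 2` defining the level partition, which stays in `ℤ`. -/
def level (s : Finset ι) (t : ι → ℤ) (i : ι) : ℤ := 2 * (∑ k ∈ s.filter (· < i), t k) + t i

/-- Consecutive elements of a sorted chain for `R` are related by `R`. -/
lemma rel_of_isChain {R : ι → ι → Prop} {l : List ι} (hs : l.SortedLT) (hl : l.IsChain R) {i j : ι}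
    (hi : i ∈ l) (hj : j ∈ l) (hij : i < j) (hbetween : ∀ x ∈ l, i < x → ¬ x < j) : R i j := by
  obtain ⟨p, hp, rfl⟩ := List.getElem_of_mem hi
  obtain ⟨q, hq, rfl⟩ := List.getElem_of_mem hj
  have hpq : p < q := hs.getElem_lt_getElem_iff.1 hij
  rcases Nat.lt_or_ge (p + 1) q with h | h
  · exact absurd (hs.getElem_lt_getElem_iff.2 h)
      (hbetween l[p + 1] (List.getElem_mem _) (hs.getElem_lt_getElem_iff.2 (Nat.lt_succ_self p)))
  · obtain rfl : q = p + 1 := by omega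
    exact List.isChain_iff_getElem.1 hl p hq

lemma sum_sgn_of_isChain : ∀ l : List Bool, l.IsChain (· ≠ ·) → Even l.length →
    (l.map sgn).sum = 0
  | [], _, _ => rfl
  | [_], _, h => by simp at h
  | x :: y :: l, h, he => by
    rw [List.isChain_cons_cons] at h
    have hl := sum_sgn_of_isChain l h.2.of_cons
      (by simpa [Nat.even_add_one] using he)
    have hxy := h.1
    cases x <;> cases y <;> simp_all [sgn]

lemma IsAlternating.sum_eq_zero {b : ι → Bool} {B : Finset ι} (h : IsAlternating b B) :
    ∑ i ∈ B, sgn (b i) = 0 := by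
  have := sum_sgn_of_isChain _ h.1 (by simpa using h.2)
  rw [List.map_map] at this
  rw [← this, ← List.sum_toFinset _ (Finset.sort_nodup _ _), Finset.sort_toFinset]
  rfl

lemma IsNCPart.sum_eq {M : Type*} [AddCommMonoid M] {s : Finset ι} {P : Finset (Finset ι)}
    (h : IsNCPart s P) (f : ι → M) : ∑ i ∈ s, f i = ∑ B ∈ P, ∑ i ∈ B, f i := by
  have hs : s = P.biUnion id := by
    ext x
    simpa using h.mem_iff x
  rw [hs, Finset.sum_biUnion]
  · rfl
  · intro B hB C hC hBC
    rw [Function.onFun, id, id, Finset.disjoint_left]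
    exact fun x hxB hxC => hBC (h.eq_of_mem B hB C hC x hxB hxC)

/-- A block with one element strictly between two elements of another block lies entirely between
them. -/
lemma IsNCPart.between {s : Finset ι} {P : Finset (Finset ι)} (h : IsNCPart s P)
    {B C : Finset ι} (hB : B ∈ P) (hC : C ∈ P) (hBC : B ≠ C) {i j x y : ι}
    (hi : i ∈ B) (hj : j ∈ B) (hx : x ∈ C) (hy : y ∈ C) (hix : i < x) (hxj : x < j) :
    i < y ∧ y < j := by
  constructor
  · by_contra hlt
    rcases (not_lt.1 hlt).lt_or_eq with hlt | rfl
    · exact hBC (h.noncrossing y i x j hlt hix hxj C hC B hB hy hx hi hj).symm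
    · exact hBC (h.eq_of_mem B hB C hC y hi hy)
  · by_contra hlt
    rcases (not_lt.1 hlt).lt_or_eq with hlt | rfl
    · exact hBC (h.noncrossing i x j y hix hxj hlt B hB C hC hi hj hx hy)
    · exact hBC (h.eq_of_mem B hB C hC j hj hy)

/-- If all blocks alternate and have even size, the level is constant on each block. Between two
consecutive elements `i < j` of a block lies a union of blocks, each with exponent sum zero, and
the exponents at `i` and `j` are opposite. The general case follows by induction on the number `N`
of elements of the block between `i` and `j`. -/
lemma IsNCPart.level_eq_of_lt {s : Finset ι} {P : Finset (Finset ι)} (h : IsNCPart s P)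
    {b : ι → Bool} (hb : ∀ B ∈ P, IsAlternating b B) {B : Finset ι} (hB : B ∈ P) (N : ℕ) :
    ∀ i ∈ B, ∀ j ∈ B, i < j → (B.filter fun x => i < x ∧ x < j).card = N →
      level s (fun k => sgn (b k)) i = level s (fun k => sgn (b k)) j := by
  induction N using Nat.strong_induction_on with
  | _ N ih =>
  intro i hi j hj hij hN
  by_cases hx : ∃ x ∈ B, i < x ∧ x < j
  · obtain ⟨x, hxB, hix, hxj⟩ := hx
    have key : ∀ i' j', i ≤ i' → j' ≤ j → (x = i' ∨ x = j') →
        (B.filter fun y => i' < y ∧ y < j').card < N := by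
      intro i' j' hi' hj' hx'
      rw [← hN]
      refine Finset.card_lt_card (Finset.ssubset_iff_of_subset ?_ |>.2 ⟨x, ?_, ?_⟩)
      · intro y hy
        simp only [Finset.mem_filter] at hy ⊢
        exact ⟨hy.1, hi'.trans_lt hy.2.1, hy.2.2.trans_le hj'⟩
      · exact Finset.mem_filter.2 ⟨hxB, hix, hxj⟩
      · rcases hx' with rfl | rfl <;> simp
    exact (ih _ (key i x le_rfl hxj.le (Or.inr rfl)) i hi x hxB hix rfl).trans
      (ih _ (key x j hix.le le_rfl (Or.inl rfl)) x hxB j hj hxj rfl)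
  · push Not at hx
    set G := s.filter fun x => i < x ∧ x < j with hG
    have hU : IsUnionOf G P := by
      intro C hC
      by_cases hBC : B = C
      · subst hBC
        right
        rw [Finset.disjoint_left]
        intro x hxB hxG
        have := (Finset.mem_filter.1 hxG).2
        exact absurd this.2 (hx x hxB this.1).not_gt
      · by_cases hd : Disjoint C G
        · exact Or.inr hd
        · obtain ⟨x, hxC, hxG⟩ := Finset.not_disjoint_iff.1 hd
          have hx' := (Finset.mem_filter.1 hxG).2
          exact Or.inl fun y hy => Finset.mem_filter.2
            ⟨h.subset hC hy, h.between hB hC hBC hi hj hxC hy hx'.1 hx'.2⟩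
    have hsum : ∑ k ∈ G, sgn (b k) = 0 := by
      rw [(h.restrict (Finset.filter_subset _ _) hU).sum_eq]
      exact Finset.sum_eq_zero fun C hC => (hb C (Finset.mem_filter.1 hC).1).sum_eq_zero
    have hsplit : s.filter (· < j) = insert i (s.filter (· < i) ∪ G) := by
      ext x
      simp only [hG, Finset.mem_insert, Finset.mem_union, Finset.mem_filter]
      constructor
      · rintro ⟨hxs, hxj⟩
        rcases lt_trichotomy x i with h | h | h
        · exact Or.inr (Or.inl ⟨hxs, h⟩)
        · exact Or.inl h
        · exact Or.inr (Or.inr ⟨hxs, h, hxj⟩)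
      · rintro (rfl | ⟨hxs, hxi⟩ | ⟨hxs, -, hxj⟩)
        · exact ⟨h.subset hB hi, hij⟩
        · exact ⟨hxs, hxi.trans hij⟩
        · exact ⟨hxs, hxj⟩
    have hne : b i ≠ b j := by
      have hch := (List.isChain_map b).1 (hb B hB).1
      refine rel_of_isChain (R := fun x y => b x ≠ b y) (Finset.sortedLT_sort B) hch
        (by simpa using hi) (by simpa using hj) hij ?_
      intro x hxB hix
      exact (hx x (by simpa using hxB) hix).not_gt
    have hsgn : sgn (b j) = - sgn (b i) := by
      cases hbi : b i <;> cases hbj : b j <;> simp_all [sgn]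
    rw [level, level, hsplit, Finset.sum_insert (by simp [hG]), Finset.sum_union, hsum, hsgn]
    · ring
    · rw [Finset.disjoint_left]
      intro x hx hxG
      exact (Finset.mem_filter.1 hx).2.asymm (Finset.mem_filter.1 hxG).2.1

lemma IsNCPart.level_eq {s : Finset ι} {P : Finset (Finset ι)} (h : IsNCPart s P)
    {b : ι → Bool} (hb : ∀ B ∈ P, IsAlternating b B) {B : Finset ι} (hB : B ∈ P)
    {i j : ι} (hi : i ∈ B) (hj : j ∈ B) :
    level s (fun k => sgn (b k)) i = level s (fun k => sgn (b k)) j := by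
  rcases lt_trichotomy i j with hij | rfl | hij
  · exact h.level_eq_of_lt hb hB _ i hi j hj hij rfl
  · rfl
  · exact (h.level_eq_of_lt hb hB _ j hj i hi hij rfl).symm

lemma level_succ {b : ℕ → Bool} {m x : ℕ} (hx : x + 1 < m) :
    level (Finset.range m) (fun k => sgn (b k)) (x + 1) =
      level (Finset.range m) (fun k => sgn (b k)) x + sgn (b x) + sgn (b (x + 1)) := by
  have : ∀ y < m, (Finset.range m).filter (· < y) = Finset.range y := by
    intro y hy
    ext z
    simp only [Finset.mem_filter, Finset.mem_range]
    omega
  rw [level, level, this _ hx, this x (by omega), Finset.sum_range_succ]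
  ring

/-- Let a word be cut into maximal alternating chunks, and let all blocks of a noncrossing partition
alternate and have even size. Then some chunk is a union of blocks. Indeed the level is constant on
each chunk and differs on adjacent chunks, so a block never meets two adjacent chunks. If a block
meets two chunks at all, take two elements of one block in different chunks at minimal distance:
every block meeting the chunk following the left one is nested between the two, and by minimality
it stays in that chunk. -/
lemma exists_chunk_isUnionOf {b : ℕ → Bool} {m : ℕ} (hm : 0 < m) {L : List (List ℕ)}
    (hL : L.flatten = List.range m) (hne : [] ∉ L)
    (hch : ∀ C ∈ L, C.IsChain fun x y => b x ≠ b y)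
    (hadj : L.IsChain fun C C' => ∀ x ∈ C.getLast?, ∀ y ∈ C'.head?, b x = b y)
    {P : Finset (Finset ℕ)} (h : IsNCPart (Finset.range m) P)
    (hb : ∀ B ∈ P, IsAlternating b B) : ∃ C ∈ L, IsUnionOf C.toFinset P := by
  have hmemL : ∀ x, x < m ↔ ∃ (p : ℕ) (hp : p < L.length), x ∈ L[p] := by
    intro x
    rw [← List.mem_range, ← hL, List.mem_flatten]
    constructor
    · rintro ⟨C, hC, hx⟩
      obtain ⟨p, hp, rfl⟩ := List.getElem_of_mem hC
      exact ⟨p, hp, hx⟩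
    · rintro ⟨p, hp, hx⟩
      exact ⟨_, List.getElem_mem hp, hx⟩
  have hsucc := (List.isChain_flatten (R := fun x y => y = x + 1) hne).1
    (by rw [hL, List.isChain_range]; intros; rfl)
  have hlt : ∀ (p q : ℕ) (hp : p < L.length) (hq : q < L.length), p < q →
      ∀ x ∈ L[p], ∀ y ∈ L[q], x < y := by
    have := (List.pairwise_lt_range (n := m))
    rw [← hL, List.pairwise_flatten] at this
    intro p q hp hq hpq
    exact List.pairwise_iff_getElem.1 this.2 p q hp hq hpq
  set lev := level (Finset.range m) (fun k => sgn (b k)) with hlev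
  have hconst : ∀ C ∈ L, ∀ x ∈ C, ∀ y ∈ C, lev x = lev y := by
    intro C hC
    have h1 := List.isChain_iff_getElem.1 (hch C hC)
    have h2 := List.isChain_iff_getElem.1 (hsucc.1 C hC)
    have h3 : C.IsChain fun x y => lev x = lev y := by
      refine List.isChain_iff_getElem.2 fun i hi => ?_
      have h1 := h1 i hi
      have h2 := h2 i hi
      have hlt : C[i + 1] < m := by
        rw [← List.mem_range, ← hL]
        exact List.mem_flatten.2 ⟨C, hC, List.getElem_mem _⟩
      rw [h2] at h1 hlt ⊢
      rw [hlev, level_succ hlt]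
      cases hx : b C[i] <;> cases hy : b (C[i] + 1) <;> simp_all [sgn]
    have : Trans (fun x y => lev x = lev y) (fun x y => lev x = lev y)
      (fun x y => lev x = lev y) := ⟨fun h h' => h.trans h'⟩
    intro x hx y hy
    obtain ⟨p, hp, rfl⟩ := List.getElem_of_mem hx
    obtain ⟨q, hq, rfl⟩ := List.getElem_of_mem hy
    have h4 := List.pairwise_iff_getElem.1 (List.isChain_iff_pairwise.1 h3)
    rcases lt_trichotomy p q with hpq | rfl | hpq
    · exact h4 p q hp hq hpq
    · rfl
    · exact (h4 q p hq hp hpq).symm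
  have hjump : ∀ (p : ℕ) (hp : p + 1 < L.length), ∀ x ∈ L[p], ∀ y ∈ L[p + 1], lev x ≠ lev y := by
    intro p hp x hx y hy
    have hx0 : L[p] ≠ [] := List.ne_nil_of_mem hx
    have hy0 : L[p + 1] ≠ [] := List.ne_nil_of_mem hy
    rw [hconst _ (List.getElem_mem _) x hx _ (List.getLast_mem hx0),
      hconst _ (List.getElem_mem _) y hy _ (List.head_mem hy0)]
    have h1 := List.isChain_iff_getElem.1 hadj p hp _ (List.getLast_mem_getLast? hx0)
      _ (List.head_mem_head? hy0)
    have h2 := List.isChain_iff_getElem.1 hsucc.2 p hp _ (List.getLast_mem_getLast? hx0)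
      _ (List.head_mem_head? hy0)
    have hlt : L[p + 1].head hy0 < m := (hmemL _).2 ⟨_, hp, List.head_mem hy0⟩
    rw [h2] at h1 hlt ⊢
    rw [hlev, level_succ hlt, ← h1]
    cases b (L[p].getLast hx0) <;> simp only [sgn, if_true, Bool.false_eq_true, if_false] <;> omega
  -- strong induction on the distance `N` of two elements of one block in different chunks
  have hcross : ∀ (N : ℕ) (p q x y : ℕ) (hp : p < L.length) (hq : q < L.length), p < q →
      x ∈ L[p] → y ∈ L[q] → (∃ B ∈ P, x ∈ B ∧ y ∈ B) → y - x = N →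
      ∃ C ∈ L, IsUnionOf C.toFinset P := by
    intro N
    induction N using Nat.strong_induction_on with
    | _ N ih =>
    rintro p q x y hp hq hpq hx hy ⟨B, hB, hxB, hyB⟩ hN
    by_contra hcon
    have hmin : ∀ (p q x' y' : ℕ) (hp : p < L.length) (hq : q < L.length), p < q →
        x' ∈ L[p] → y' ∈ L[q] → ∀ B ∈ P, x' ∈ B → y' ∈ B → ¬ y' - x' < y - x :=
      fun p q x' y' hp hq hpq hx' hy' B hB hxB hyB hlt =>
        hcon (ih _ (hN ▸ hlt) p q x' y' hp hq hpq hx' hy' ⟨B, hB, hxB, hyB⟩ rfl)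
    have hpq' : p + 1 < q := by
      rcases Nat.lt_or_ge (p + 1) q with hlt | hge
      · exact hlt
      · obtain rfl : q = p + 1 := by omega
        exact absurd (h.level_eq hb hB hxB hyB) (hjump p hq x hx y hy)
    have hp1 : p + 1 < L.length := hpq'.trans hq
    refine hcon ⟨L[p + 1], List.getElem_mem _, fun D hD => ?_⟩
    by_cases hd : Disjoint D L[p + 1].toFinset
    · exact Or.inr hd
    · left
      obtain ⟨z, hzD, hzC⟩ := Finset.not_disjoint_iff.1 hd
      rw [List.mem_toFinset] at hzC
      have hxz := hlt p (p + 1) hp hp1 (Nat.lt_succ_self p) x hx z hzC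
      have hzy := hlt (p + 1) q hp1 hq hpq' z hzC y hy
      have hBD : B ≠ D := by
        rintro rfl
        exact hmin p (p + 1) x z hp hp1 (Nat.lt_succ_self p) hx hzC B hB hxB hzD (by omega)
      intro z' hz'
      have hz'xy := h.between hB hD hBD hxB hyB hzD hz' hxz hzy
      obtain ⟨r, hr, hz'r⟩ := (hmemL z').1 (Finset.mem_range.1 (h.subset hD hz'))
      rw [List.mem_toFinset]
      rcases lt_trichotomy r (p + 1) with hrp | rfl | hrp
      · exact absurd (by omega) (hmin r (p + 1) z' z hr hp1 hrp hz'r hzC D hD hz' hzD)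
      · exact hz'r
      · exact absurd (by omega) (hmin (p + 1) r z z' hp1 hr hrp hzC hz'r D hD hzD hz')
  by_contra hcon
  obtain ⟨p, hp, -⟩ := (hmemL 0).1 hm
  refine hcon ⟨L[p], List.getElem_mem _, fun D hD => ?_⟩
  by_cases hd : Disjoint D L[p].toFinset
  · exact Or.inr hd
  · left
    obtain ⟨z, hzD, hzC⟩ := Finset.not_disjoint_iff.1 hd
    rw [List.mem_toFinset] at hzC
    intro z' hz'
    obtain ⟨r, hr, hz'r⟩ := (hmemL z').1 (Finset.mem_range.1 (h.subset hD hz'))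
    rw [List.mem_toFinset]
    rcases lt_trichotomy r p with hrp | rfl | hrp
    · exact absurd (hcross _ r p z' z hr hp hrp hz'r hzC ⟨D, hD, hz', hzD⟩ rfl) hcon
    · exact hz'r
    · exact absurd (hcross _ p r z z' hp hr hrp hzC hz'r ⟨D, hD, hzD, hz'⟩ rfl) hcon

lemma IsUnionOf.even_card {s V : Finset ι} {P : Finset (Finset ι)} (h : IsNCPart s P)
    (hV : V ⊆ s) (hU : IsUnionOf V P) {b : ι → Bool} (hb : ∀ B ∈ P, IsAlternating b B) :
    Even V.card := by
  rw [Finset.card_eq_sum_ones, (h.restrict hV hU).sum_eq, even_iff_two_dvd]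
  refine Finset.dvd_sum fun B hB => ?_
  rw [← Finset.card_eq_sum_ones, ← even_iff_two_dvd]
  exact (hb B (Finset.mem_filter.1 hB).1).2

end Levels

/-! ### Vanishing of the cumulants that do not alternate -/

section Vanishing
variable {A : Type*} [Ring A] [Algebra ℂ A] [StarRing A] [StarModule ℂ A]

lemma isNCPart_singleton {ι : Type*} [LinearOrder ι] {s : Finset ι} (hs : s.Nonempty) :
    IsNCPart s {s} := by
  refine ⟨?_, ?_, ?_, ?_⟩ <;> simp_all

/-- The cumulants of an `R`-diagonal element vanish on all words in `a` and `star a` except the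
alternating ones of even length. The proof is by induction on the length of the word. -/
theorem listCum_eq_zero {φ : A →ₗ[ℂ] ℂ} (h1 : φ 1 = 1) {κ : ∀ n : ℕ, (Fin n → A) → ℂ}
    (hκ : MomentCumulant φ κ) {a : A} (ha : RDiag φ a) (m : ℕ) :
    ∀ l : List Bool, l.length = m → ¬ (l.IsChain (· ≠ ·) ∧ Even l.length) →
      listCum κ (l.map (letter a)) = 0 := by
  classical
  induction m using Nat.strong_induction_on with
  | _ m ih =>
  intro l hlm hbad
  have hm : 0 < m := by
    rw [← hlm, List.length_pos_iff]
    rintro rfl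
    exact hbad (by simp)
  set b : ℕ → Bool := fun i => l.getD i false with hb
  have hrange : (List.range m).map b = l := by
    refine List.ext_getElem (by simpa using hlm.symm) fun i h₁ h₂ => ?_
    simp [hb, h₂]
  set w : ℕ → A := fun i => letter a (b i) with hw
  have hblock : ∀ B : Finset ℕ, blockCum κ w B = listCum κ ((B.sort.map b).map (letter a)) := by
    intro B
    rw [blockCum, List.map_map]
    rfl
  -- the maximal alternating chunks of positions
  set L := (List.range m).splitBy (fun x y => decide (b x ≠ b y)) with hLdef
  have hL : L.flatten = List.range m := List.flatten_splitBy _ _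
  have hne : [] ∉ L := List.nil_notMem_splitBy _ _
  have hch : ∀ C ∈ L, C.IsChain fun x y => b x ≠ b y := by
    intro C hC
    simpa using List.isChain_of_mem_splitBy hC
  have hadj : L.IsChain fun C C' => ∀ x ∈ C.getLast?, ∀ y ∈ C'.head?, b x = b y := by
    refine (List.isChain_getLast_head_splitBy _ _).imp ?_
    rintro C C' ⟨hC, hC', h⟩ x hx y hy
    rw [List.getLast?_eq_some_getLast hC] at hx
    rw [List.head?_eq_some_head hC'] at hy
    obtain rfl := Option.some.inj hx
    obtain rfl := Option.some.inj hy
    simpa using h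
  have hLne : L ≠ [] := by
    intro h
    rw [h] at hL
    have := congrArg List.length hL
    simp at this
    omega
  set LF : List (List ℕ × Bool) := L.map fun C => (C, decide (Even C.length)) with hLF
  have hfst : (LF.map Prod.fst) = L := by
    rw [hLF, List.map_map]
    exact List.map_id _
  have hzero : φ (centredProd φ w LF) = 0 := by
    have hadm : ∃ i, Admissible φ a i (L.map fun C => (C.map fun x => letter a (b x)).prod -
        if decide (Even C.length) then
          algebraMap ℂ A (φ (C.map fun x => letter a (b x)).prod) else 0) := by
      obtain ⟨C, L', hCL⟩ := List.exists_cons_of_ne_nil hLne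
      have hC : C ≠ [] := fun h => hne (by simp [hCL, h])
      refine ⟨letterIndex (b (C.head hC)), admissible_chunks h1 a b L hne hch hadj _ ?_⟩
      intro D hD x hx
      rw [hCL] at hD
      obtain rfl : C = D := by simpa using hD
      rw [List.head?_eq_some_head hC] at hx
      rw [Option.some.inj hx]
    obtain ⟨i, hi⟩ := hadm
    have := hi.moment_eq_zero h1 ha (by simpa using hLne)
    rwa [centredProd, hLF, List.map_map]
  have hsum := centred_moment h1 hκ w _ LF rfl (by rw [hfst, hL]; exact List.sortedLT_range m)
  have hrf : (LF.map Prod.fst).flatten.toFinset = Finset.range m := by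
    rw [hfst, hL]
    ext x
    simp
  -- only the one-block partition contributes to the expansion
  rw [hzero, hrf, Finset.sum_eq_single {Finset.range m}] at hsum
  · rw [Finset.prod_singleton, hblock, Finset.sort_range, hrange] at hsum
    exact hsum.symm
  · intro P hP hPne
    obtain ⟨hP, hPT⟩ := Finset.mem_filter.1 hP
    rw [mem_ncParts] at hP
    by_cases hall : ∀ B ∈ P, IsAlternating b B
    -- the chunk that is a union of blocks is even, so `P` is not in the range of summation
    · obtain ⟨C, hC, hU⟩ := exists_chunk_isUnionOf hm hL hne hch hadj hP hall
      have hCs : C.toFinset ⊆ Finset.range m := by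
        intro x hx
        rw [Finset.mem_range, ← List.mem_range, ← hL]
        exact List.mem_flatten.2 ⟨C, hC, List.mem_toFinset.1 hx⟩
      have hnd : C.Nodup := by
        have := List.nodup_range (n := m)
        rw [← hL, List.nodup_flatten] at this
        exact this.1 C hC
      have heven := hU.even_card hP hCs hall
      rw [List.toFinset_card_of_nodup hnd] at heven
      refine absurd hU (hPT _ ⟨C, ?_, rfl⟩)
      exact List.mem_map.2 ⟨C, hC, by simp [heven]⟩
    -- a block smaller than the whole word violates the claim, so its cumulant vanishes by induction
    · push Not at hall
      obtain ⟨B, hB, hBb⟩ := hall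
      refine Finset.prod_eq_zero hB ?_
      rw [hblock]
      have hBm : B ≠ Finset.range m := by
        rintro rfl
        refine hPne (Finset.eq_singleton_iff_unique_mem.2 ⟨hB, fun C hC => ?_⟩)
        obtain ⟨x, hx⟩ := hP.nonempty C hC
        exact hP.eq_of_mem C hC _ hB x hx (hP.subset hC hx)
      have hcard : B.card < m := by
        have := Finset.card_lt_card ((hP.subset hB).ssubset_of_ne hBm)
        simpa using this
      refine ih B.card hcard _ (by simp) ?_
      simpa [IsAlternating] using hBb
  · intro hnot
    refine absurd ?_ hnot
    rw [Finset.mem_filter, mem_ncParts]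
    refine ⟨isNCPart_singleton ⟨0, Finset.mem_range.2 hm⟩, ?_⟩
    rintro _ ⟨C, hC, rfl⟩ hU
    -- an even chunk that is a union of blocks of the one-block partition is the whole word,
    -- which is then alternating of even length
    obtain ⟨D, hD, hDC⟩ := List.mem_map.1 hC
    obtain ⟨rfl, heven⟩ : D = C ∧ Even C.length := by
      simp only [Prod.mk.injEq, decide_eq_true_eq] at hDC
      exact ⟨hDC.1, hDC.1 ▸ hDC.2⟩
    have hinf : D <:+: List.range m := hL ▸ List.infix_of_mem_flatten hD
    rcases hU _ (Finset.mem_singleton_self _) with h | h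
    · have hlen : m ≤ D.length := by
        have := (Finset.card_le_card h).trans (List.toFinset_card_le D)
        simpa using this
      have hDm : D = List.range m := hinf.eq_of_length_le (by simpa using hlen)
      refine hbad ⟨?_, ?_⟩
      · rw [← hrange, List.isChain_map, ← hDm]
        exact hch D hD
      · rw [hDm, List.length_range] at heven
        rwa [hlm]
    · have hDne : D ≠ [] := fun h => hne (h ▸ hD)
      obtain ⟨x, hx⟩ := List.exists_mem_of_ne_nil D hDne
      refine Finset.disjoint_left.1 h (Finset.mem_range.2 (List.mem_range.1 (hinf.subset hx))) ?_
      exact List.mem_toFinset.2 hx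

end Vanishing

/-- Let `a` be `R`-diagonal and `t₁, …, tₙ ∈ {−1, 1}`. If a noncrossing
partition `π` satisfies `κ_π(a^{t₁}, …, a^{tₙ}) ≠ 0`, then `t₁ + ⋯ + tₙ = 0` and each block
of `π` is contained in a block of the level partition `σ` defined by
`i ∼ j ↔ t₁ + ⋯ + t_{i−1} + tᵢ/2 = t₁ + ⋯ + t_{j−1} + tⱼ/2`. -/
theorem rDiagonal_cumulants_level_partition
    {A : Type*} [Ring A] [Algebra ℂ A] [StarRing A] [StarModule ℂ A]
    (φ : A →ₗ[ℂ] ℂ) (hφ : IsFaithfulTracialState φ)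
    (κ : ∀ n : ℕ, (Fin n → A) → ℂ) (hκ : MomentCumulant φ κ)
    (a : A) (ha : RDiag φ a)
    (n : ℕ) (t : Fin n → ℤ) (ht : ∀ i, t i = 1 ∨ t i = -1)
    (π : Finpartition (Finset.univ : Finset (Fin n))) (hπ : IsNoncrossing π)
    (hne : cumPart κ π (fun i => sgnPow a (t i)) ≠ 0) :
    (∑ i, t i) = 0 ∧
      ∀ B ∈ π.parts, ∀ i ∈ B, ∀ j ∈ B,
        2 * (∑ k ∈ Finset.Iio i, t k) + t i = 2 * (∑ k ∈ Finset.Iio j, t k) + t j := by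
  set b : Fin n → Bool := fun i => decide (t i = 1) with hb
  have ht' : (fun i => sgn (b i)) = t := by
    funext i
    rcases ht i with h | h <;> simp [sgn, hb, h]
  have hP := isNCPart_parts hπ
  have halt : ∀ B ∈ π.parts, IsAlternating b B := by
    intro B hB
    by_contra hbad
    refine hne ?_
    rw [cumPart_eq]
    refine Finset.prod_eq_zero hB ?_
    have := listCum_eq_zero hφ.unital hκ ha B.card (B.sort.map b) (by simp)
      (by simpa [IsAlternating] using hbad)
    rw [List.map_map] at this
    rw [blockCum, ← this]
    congr 1
    refine List.map_congr_left fun i _ => ?_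
    simp [sgnPow, letter, hb]
  refine ⟨?_, fun B hB i hi j hj => ?_⟩
  · rw [← ht', hP.sum_eq]
    exact Finset.sum_eq_zero fun B hB => (halt B hB).sum_eq_zero
  · have h := hP.level_eq halt hB hi hj
    have hIio : ∀ i : Fin n, (Finset.univ : Finset (Fin n)).filter (· < i) = Finset.Iio i := by
      intro i
      ext x
      simp
    rwa [ht', level, level, hIio, hIio] at h
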